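/- Let A = A⁰ ⊕ A¹ be a graded-simple ℤ₂-graded Ω-algebra that is not simple, let I be a proper nonzero ungraded ideal, let f(x₁,…,x_m) be multilinear with m ≥ 2, fix homogeneous a₃,…,a_m ∈ A, and set d(x,y) = f(x,y,a₃,…,a_m). Then for all x, y ∈ I: d(π₀(x), π₁(y)) = d(π₁(x), π₀(y)) and d(π₀(x), π₀(y)) = d(π₁(x), π₁(y)). -/

import Mathlib

/-!
For homogeneous `a₃, …, a_m` and `x, y ∈ I`, additivity of `d` in each slot gives
`d(π₀x, y) - d(x, π₀y) = d(π₀x, π₁y) - d(π₁x, π₀y)` and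
`d(π₀x, y) - d(x, π₁y) = d(π₀x, π₀y) - d(π₁x, π₁y)`. The left-hand sides lie in `I`, since a value
of a term is in `I` as soon as one of its variables is substituted in `I`
(`OmegaTerm.eval_mem_ideal`); the right-hand sides are homogeneous
(`OmegaTerm.exists_eval_mem_grading`). It remains to see that `I` has no nonzero homogeneous
elements: `(A⁰ ∩ I) ⊕ (A¹ ∩ I)` is a graded ideal (`omegaIdeal_gradedPart`) contained in `I ≠ A`, so
it vanishes by graded-simplicity.
-/


open scoped TensorProduct

noncomputable section

universe u v

/-- Terms of the free Ω-algebra over a signature with operation symbols `O` of arities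
`ar`, in the variables `X`. -/
inductive OmegaTerm (O : Type u) (ar : O → ℕ) (X : Type v) : Type (max u v)
  | var : X → OmegaTerm O ar X
  | op (ω : O) (ts : Fin (ar ω) → OmegaTerm O ar X) : OmegaTerm O ar X

variable {O : Type u} {ar : O → ℕ}

/-- The number of occurrences of the variable `x` in a term. -/
def OmegaTerm.varCount {X : Type v} [DecidableEq X] : OmegaTerm O ar X → X → ℕ
  | .var y, x => if y = x then 1 else 0
  | .op _ ts, x => ∑ i, (ts i).varCount x

variable (F : Type*) [Field F] {M : Type*} [AddCommGroup M] [Module F M]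

/-- Evaluation of a term in an Ω-algebra `(M, interp)` under a substitution `φ`. -/
def OmegaTerm.eval {X : Type v}
    (interp : ∀ ω : O, MultilinearMap F (fun _ : Fin (ar ω) => M) M)
    (φ : X → M) : OmegaTerm O ar X → M
  | .var x => φ x
  | .op ω ts => interp ω (fun i => (ts i).eval interp φ)

/-- `I` is an ideal of the Ω-algebra `(M, interp)`: it is closed under applying any
operation of positive arity with one entry in `I`. -/
def OmegaIdeal (interp : ∀ ω : O, MultilinearMap F (fun _ : Fin (ar ω) => M) M)
    (I : Submodule F M) : Prop :=
  ∀ (ω : O), 0 < ar ω → ∀ (x : Fin (ar ω) → M) (s : Fin (ar ω)),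
    x s ∈ I → interp ω x ∈ I

/-- The square `A·A` of an Ω-algebra: the span of all values `f(s₁,s₂,a₁,…,a_r)` of
terms `f` linear in their first two variables. -/
def omegaSq (interp : ∀ ω : O, MultilinearMap F (fun _ : Fin (ar ω) => M) M) :
    Submodule F M :=
  Submodule.span F {z | ∃ (t : OmegaTerm O ar ℕ) (φ : ℕ → M),
    t.varCount 0 = 1 ∧ t.varCount 1 = 1 ∧ z = t.eval F interp φ}

/-- The Ω-algebra `(M, interp)` is simple: `M² ≠ 0` and there are no nontrivial proper
ideals. -/
def OmegaSimple (interp : ∀ ω : O, MultilinearMap F (fun _ : Fin (ar ω) => M) M) : Prop :=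
  omegaSq F interp ≠ ⊥ ∧ ∀ I : Submodule F M, OmegaIdeal F interp I → I = ⊥ ∨ I = ⊤

/-- A submodule is graded w.r.t. a ℤ₂-grading `p` if it is the sum of its homogeneous
components. -/
def IsGradedSub (p : ZMod 2 → Submodule F M) (I : Submodule F M) : Prop :=
  (p 0 ⊓ I) ⊔ (p 1 ⊓ I) = I

/-- The ℤ₂-graded Ω-algebra `(M, interp, p)` is graded-simple: `M² ≠ 0` and there are no
nontrivial proper graded ideals. -/
def OmegaGradedSimple (interp : ∀ ω : O, MultilinearMap F (fun _ : Fin (ar ω) => M) M)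
    (p : ZMod 2 → Submodule F M) : Prop :=
  omegaSq F interp ≠ ⊥ ∧
    ∀ I : Submodule F M, OmegaIdeal F interp I → IsGradedSub F p I → I = ⊥ ∨ I = ⊤

/-- Compatibility of a ℤ₂-grading with the Ω-algebra structure: operations add degrees. -/
def OmegaGradedCompat (interp : ∀ ω : O, MultilinearMap F (fun _ : Fin (ar ω) => M) M)
    (p : ZMod 2 → Submodule F M) : Prop :=
  ∀ (ω : O) (d : Fin (ar ω) → ZMod 2) (x : Fin (ar ω) → M),
    (∀ i, x i ∈ p (d i)) → interp ω x ∈ p (∑ i, d i)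

/-- The Ω-algebra structure on `A ⊗ FZ₂ = A ⊕ εA` (realized as `M × M`, with
`(a, b) = a + εb` and `ε² = 1`):
`ω(ε^{i₁}a₁,…,ε^{i_n}a_n) = ε^{i₁+⋯+i_n} ω(a₁,…,a_n)`, extended multilinearly. -/
def fzInterp (interp : ∀ ω : O, MultilinearMap F (fun _ : Fin (ar ω) => M) M) (ω : O) :
    MultilinearMap F (fun _ : Fin (ar ω) => M × M) (M × M) :=
  (LinearMap.inl F M M).compMultilinearMap
      (∑ S ∈ Finset.univ.filter
          (fun S : Fin (ar ω) → Bool => (Finset.univ.filter fun i => S i = true).card % 2 = 0),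
        (interp ω).compLinearMap
          (fun i => if S i then LinearMap.snd F M M else LinearMap.fst F M M)) +
    (LinearMap.inr F M M).compMultilinearMap
      (∑ S ∈ Finset.univ.filter
          (fun S : Fin (ar ω) → Bool => (Finset.univ.filter fun i => S i = true).card % 2 = 1),
        (interp ω).compLinearMap
          (fun i => if S i then LinearMap.snd F M M else LinearMap.fst F M M))

/-- The ℤ₂-grading of `A ⊗ FZ₂`: even part `A`, odd part `εA`. -/
def fzGrading (i : ZMod 2) : Submodule F (M × M) :=
  if i = 0 then LinearMap.range (LinearMap.inl F M M)
  else LinearMap.range (LinearMap.inr F M M)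

lemma OmegaTerm.eval_congr_of_varCount
    (interp : ∀ ω : O, MultilinearMap F (fun _ : Fin (ar ω) => M) M)
    (k : ℕ) (φ ψ : ℕ → M) (h : ∀ j, j ≠ k → φ j = ψ j) (t : OmegaTerm O ar ℕ)
    (ht : t.varCount k = 0) : t.eval F interp φ = t.eval F interp ψ := by
  induction t with
  | var j =>
    have hj : j ≠ k := by
      intro hj
      simp [OmegaTerm.varCount, hj] at ht
    exact h j hj
  | op ω ts ih =>
    simp only [OmegaTerm.varCount, Finset.sum_eq_zero_iff, Finset.mem_univ, true_imp_iff] at ht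
    simp only [OmegaTerm.eval]
    congr 1
    funext i
    exact ih i (ht i)

/-- A term in which the variable `k` occurs exactly once is additive in that variable. -/
lemma OmegaTerm.eval_add_of_varCount
    (interp : ∀ ω : O, MultilinearMap F (fun _ : Fin (ar ω) => M) M)
    (k : ℕ) (φ ψ χ : ℕ → M) (hφ : ∀ j, j ≠ k → φ j = χ j) (hψ : ∀ j, j ≠ k → ψ j = χ j)
    (hk : χ k = φ k + ψ k) (t : OmegaTerm O ar ℕ) (ht : t.varCount k = 1) :
    t.eval F interp χ = t.eval F interp φ + t.eval F interp ψ := by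
  induction t with
  | var j =>
    have hj : j = k := by
      by_contra hj
      simp [OmegaTerm.varCount, hj] at ht
    subst hj
    exact hk
  | op ω ts ih =>
    simp only [OmegaTerm.varCount] at ht
    -- Exactly one argument of `ω` contains the variable, and it contains it once.
    obtain ⟨i, hi⟩ : ∃ i, (ts i).varCount k ≠ 0 := by
      by_contra! h
      simp [h] at ht
    rw [← Finset.add_sum_erase _ _ (Finset.mem_univ i)] at ht
    have hi1 : (ts i).varCount k = 1 := by omega
    have h0 : ∑ l ∈ Finset.univ.erase i, (ts l).varCount k = 0 := by omega
    have hl : ∀ l, l ≠ i → (ts l).varCount k = 0 := fun l hli =>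
      Finset.sum_eq_zero_iff.1 h0 l (by simp [hli])
    have key : ∀ ξ : ℕ → M, (∀ j, j ≠ k → ξ j = χ j) →
        (fun l => (ts l).eval F interp ξ) =
          Function.update (fun l => (ts l).eval F interp χ) i ((ts i).eval F interp ξ) := by
      intro ξ hξ
      funext l
      by_cases hli : l = i
      · subst hli; simp
      · rw [Function.update_of_ne hli]
        exact OmegaTerm.eval_congr_of_varCount F interp k ξ χ hξ _ (hl l hli)
    simp only [OmegaTerm.eval]
    rw [key φ hφ, key ψ hψ, ← MultilinearMap.map_update_add, ← ih i hi1,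
      ← key χ (fun _ _ => rfl)]

lemma OmegaTerm.eval_mem_ideal
    (interp : ∀ ω : O, MultilinearMap F (fun _ : Fin (ar ω) => M) M)
    (I : Submodule F M) (hI : OmegaIdeal F interp I) (k : ℕ) (φ : ℕ → M) (hφ : φ k ∈ I)
    (t : OmegaTerm O ar ℕ) (ht : t.varCount k ≠ 0) : t.eval F interp φ ∈ I := by
  induction t with
  | var j =>
    have hj : j = k := by
      by_contra hj
      simp [OmegaTerm.varCount, hj] at ht
    subst hj
    exact hφ
  | op ω ts ih =>
    obtain ⟨i, hi⟩ : ∃ i, (ts i).varCount k ≠ 0 := by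
      by_contra! h
      simp [OmegaTerm.varCount, h] at ht
    exact hI ω i.pos _ i (ih i hi)

/-- With homogeneous parameters `a j`, `j ≥ 2`, a term in the variables `0` and `1` is homogeneous
on homogeneous arguments; its degree is that of the arguments, counted with multiplicity, shifted
by a constant `c` depending only on the term and the parameters. -/
lemma OmegaTerm.exists_eval_mem_grading
    (interp : ∀ ω : O, MultilinearMap F (fun _ : Fin (ar ω) => M) M)
    (p : ZMod 2 → Submodule F M) (hcompat : OmegaGradedCompat F interp p)
    (a : ℕ → M) (ha : ∀ j : ℕ, 2 ≤ j → ∃ i : ZMod 2, a j ∈ p i) (t : OmegaTerm O ar ℕ) :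
    ∃ c : ZMod 2, ∀ (e₀ e₁ : ZMod 2) (x y : M), x ∈ p e₀ → y ∈ p e₁ →
      t.eval F interp (fun j => if j = 0 then x else if j = 1 then y else a j) ∈
        p ((t.varCount 0 : ZMod 2) * e₀ + (t.varCount 1 : ZMod 2) * e₁ + c) := by
  induction t with
  | var j =>
    rcases j with _ | _ | j
    · exact ⟨0, fun e₀ e₁ x y hx hy => by simpa [OmegaTerm.eval, OmegaTerm.varCount] using hx⟩
    · exact ⟨0, fun e₀ e₁ x y hx hy => by simpa [OmegaTerm.eval, OmegaTerm.varCount] using hy⟩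
    · obtain ⟨i, hi⟩ := ha (j + 2) (by omega)
      exact ⟨i, fun e₀ e₁ x y hx hy => by simpa [OmegaTerm.eval, OmegaTerm.varCount] using hi⟩
  | op ω ts ih =>
    choose c hc using ih
    refine ⟨∑ i, c i, fun e₀ e₁ x y hx hy => ?_⟩
    have := hcompat ω _ _ (fun i => hc i e₀ e₁ x y hx hy)
    simpa only [OmegaTerm.eval, OmegaTerm.varCount, Nat.cast_sum, Finset.sum_mul,
      Finset.sum_add_distrib] using this

/-- The largest graded submodule of an ideal is an ideal: after splitting all arguments of an
operation into homogeneous components, each resulting value is homogeneous and lies in `I`. -/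
lemma omegaIdeal_gradedPart
    (interp : ∀ ω : O, MultilinearMap F (fun _ : Fin (ar ω) => M) M)
    (p : ZMod 2 → Submodule F M) (hcompl : IsCompl (p 0) (p 1))
    (hcompat : OmegaGradedCompat F interp p)
    (I : Submodule F M) (hI : OmegaIdeal F interp I) :
    OmegaIdeal F interp ((p 0 ⊓ I) ⊔ (p 1 ⊓ I)) := by
  intro ω hω x s hs
  have hdec : ∀ i, ∃ u v : M, u ∈ p 0 ∧ v ∈ p 1 ∧ u + v = x i ∧ (i = s → u ∈ I ∧ v ∈ I) := by
    intro i
    by_cases his : i = s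
    · subst his
      obtain ⟨u, hu, v, hv, huv⟩ := Submodule.mem_sup.1 hs
      exact ⟨u, v, hu.1, hv.1, huv, fun _ => ⟨hu.2, hv.2⟩⟩
    · have hx : x i ∈ p 0 ⊔ p 1 := by rw [hcompl.sup_eq_top]; trivial
      obtain ⟨u, hu, v, hv, huv⟩ := Submodule.mem_sup.1 hx
      exact ⟨u, v, hu, hv, huv, fun h => absurd h his⟩
  choose u v hu hv huv hIs using hdec
  have hx : x = u + v := funext fun i => (huv i).symm
  rw [hx, MultilinearMap.map_add_univ]
  refine Submodule.sum_mem _ fun S _ => ?_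
  have hmem : interp ω (S.piecewise u v) ∈ I := by
    refine hI ω hω _ s ?_
    by_cases h : s ∈ S
    · simpa [h] using (hIs s rfl).1
    · simpa [h] using (hIs s rfl).2
  have hdeg := hcompat ω (fun i => if i ∈ S then 0 else 1) (S.piecewise u v) (by
    intro i
    by_cases h : i ∈ S
    · simpa [h] using hu i
    · simpa [h] using hv i)
  generalize (∑ i, if i ∈ S then (0 : ZMod 2) else 1) = e at hdeg
  fin_cases e
  · exact Submodule.mem_sup_left ⟨hdeg, hmem⟩
  · exact Submodule.mem_sup_right ⟨hdeg, hmem⟩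

lemma eq_zero_of_mem_properIdeal_of_homogeneous
    (interp : ∀ ω : O, MultilinearMap F (fun _ : Fin (ar ω) => M) M)
    (p : ZMod 2 → Submodule F M) (hcompl : IsCompl (p 0) (p 1))
    (hcompat : OmegaGradedCompat F interp p) (hgs : OmegaGradedSimple F interp p)
    (I : Submodule F M) (hI : OmegaIdeal F interp I) (hIT : I ≠ ⊤)
    (e : ZMod 2) (z : M) (hz : z ∈ p e) (hzI : z ∈ I) : z = 0 := by
  have hle : (p 0 ⊓ I) ⊔ (p 1 ⊓ I) ≤ I := sup_le inf_le_right inf_le_right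
  have hgr : IsGradedSub F p ((p 0 ⊓ I) ⊔ (p 1 ⊓ I)) :=
    le_antisymm (sup_le inf_le_right inf_le_right)
      (sup_le ((le_inf inf_le_left le_sup_left).trans le_sup_left)
        ((le_inf inf_le_left le_sup_right).trans le_sup_right))
  rcases hgs.2 _ (omegaIdeal_gradedPart F interp p hcompl hcompat I hI) hgr with h | h
  · rw [← Submodule.mem_bot F, ← h]
    fin_cases e
    · exact Submodule.mem_sup_left ⟨hz, hzI⟩
    · exact Submodule.mem_sup_right ⟨hz, hzI⟩
  · exact absurd (top_le_iff.1 (h ▸ hle)) hIT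

/-- The symmetry of `d` for arbitrary homogeneous decompositions `x₀ + x₁` and `y₀ + y₁` of two
elements of `I`. -/
lemma d_symmetry_of_decomposition
    (interp : ∀ ω : O, MultilinearMap F (fun _ : Fin (ar ω) => M) M)
    (p : ZMod 2 → Submodule F M) (hcompl : IsCompl (p 0) (p 1))
    (hcompat : OmegaGradedCompat F interp p) (hgs : OmegaGradedSimple F interp p)
    (I : Submodule F M) (hI : OmegaIdeal F interp I) (hIT : I ≠ ⊤) (t : OmegaTerm O ar ℕ)
    (c0 : t.varCount 0 = 1) (c1 : t.varCount 1 = 1)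
    (a : ℕ → M) (ha : ∀ j : ℕ, 2 ≤ j → ∃ i : ZMod 2, a j ∈ p i) (d : M → M → M)
    (hd : d = fun x y =>
      t.eval F interp (fun j => if j = 0 then x else if j = 1 then y else a j))
    (x₀ x₁ y₀ y₁ : M) (hx₀ : x₀ ∈ p 0) (hx₁ : x₁ ∈ p 1) (hy₀ : y₀ ∈ p 0) (hy₁ : y₁ ∈ p 1)
    (hx : x₀ + x₁ ∈ I) (hy : y₀ + y₁ ∈ I) : d x₀ y₁ = d x₁ y₀ ∧ d x₀ y₀ = d x₁ y₁ := by
  subst hd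
  set d : M → M → M := fun x y =>
    t.eval F interp (fun j => if j = 0 then x else if j = 1 then y else a j)
  have addl : ∀ u v w, d (u + v) w = d u w + d v w := fun u v w =>
    OmegaTerm.eval_add_of_varCount F interp 0 _ _ _ (fun j hj => by simp [hj])
      (fun j hj => by simp [hj]) (by simp) t c0
  have addr : ∀ u v w, d u (v + w) = d u v + d u w := fun u v w =>
    OmegaTerm.eval_add_of_varCount F interp 1 _ _ _ (fun j hj => by simp [hj])
      (fun j hj => by simp [hj]) (by simp) t c1
  have meml : ∀ v, d (x₀ + x₁) v ∈ I := fun v =>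
    OmegaTerm.eval_mem_ideal F interp I hI 0 _ (by simpa using hx) t (by omega)
  have memr : ∀ u, d u (y₀ + y₁) ∈ I := fun u =>
    OmegaTerm.eval_mem_ideal F interp I hI 1 _ (by simpa using hy) t (by omega)
  obtain ⟨c, hc⟩ := OmegaTerm.exists_eval_mem_grading F interp p hcompat a ha t
  have hdeg : ∀ (e₀ e₁ : ZMod 2) (u v : M), u ∈ p e₀ → v ∈ p e₁ → d u v ∈ p (e₀ + e₁ + c) := by
    intro e₀ e₁ u v hu hv
    have := hc e₀ e₁ u v hu hv
    rwa [c0, c1, Nat.cast_one, one_mul, one_mul] at this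
  have zero := eq_zero_of_mem_properIdeal_of_homogeneous F interp p hcompl hcompat hgs I hI hIT
  have ex : ∀ v, d (x₀ + x₁) v = d x₀ v + d x₁ v := fun v => addl _ _ _
  have ey : ∀ u, d u (y₀ + y₁) = d u y₀ + d u y₁ := fun u => addr _ _ _
  constructor
  · refine sub_eq_zero.1 (zero (0 + 1 + c) _ (sub_mem (hdeg 0 1 _ _ hx₀ hy₁) ?_) ?_)
    · rw [add_comm (0 : ZMod 2) 1]
      exact hdeg 1 0 _ _ hx₁ hy₀
    · have := sub_mem (memr x₀) (meml y₀)
      rwa [ex, ey, add_sub_add_left_eq_sub] at this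
  · refine sub_eq_zero.1 (zero (0 + 0 + c) _ (sub_mem (hdeg 0 0 _ _ hx₀ hy₀) ?_) ?_)
    · have h11 : (0 : ZMod 2) + 0 = 1 + 1 := by decide
      rw [h11]
      exact hdeg 1 1 _ _ hx₁ hy₁
    · have := sub_mem (memr x₀) (meml y₁)
      rwa [ex, ey, add_comm (d x₀ y₀), add_sub_add_left_eq_sub] at this

/-- with `A` graded-simple but not simple, `I` a proper nonzero ungraded
ideal, `f` multilinear in `m ≥ 2` variables, `a₃,…,a_m` homogeneous, and
`d(x,y) = f(x,y,a₃,…,a_m)`, one has `d(π₀x, π₁y) = d(π₁x, π₀y)` and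
`d(π₀x, π₀y) = d(π₁x, π₁y)` for all `x, y ∈ I`. -/
theorem d_proj_symmetry
    (interp : ∀ ω : O, MultilinearMap F (fun _ : Fin (ar ω) => M) M)
    (p : ZMod 2 → Submodule F M) (hcompl : IsCompl (p 0) (p 1))
    (hcompat : OmegaGradedCompat F interp p)
    (hgs : OmegaGradedSimple F interp p) (hns : ¬ OmegaSimple F interp)
    (I : Submodule F M) (hI : OmegaIdeal F interp I) (hI0 : I ≠ ⊥) (hIT : I ≠ ⊤)
    (m : ℕ) (hm : 2 ≤ m) (t : OmegaTerm O ar ℕ)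
    (hml : ∀ j : ℕ, t.varCount j = if j < m then 1 else 0)
    (a : ℕ → M) (ha : ∀ j : ℕ, 2 ≤ j → ∃ i : ZMod 2, a j ∈ p i) :
    letI π₀ : M →ₗ[F] M :=
      (p 0).subtype ∘ₗ Submodule.linearProjOfIsCompl (p 0) (p 1) hcompl
    letI π₁ : M →ₗ[F] M :=
      (p 1).subtype ∘ₗ Submodule.linearProjOfIsCompl (p 1) (p 0) hcompl.symm
    letI d : M → M → M := fun x y =>
      t.eval F interp (fun j => if j = 0 then x else if j = 1 then y else a j)
    ∀ x ∈ I, ∀ y ∈ I,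
      d (π₀ x) (π₁ y) = d (π₁ x) (π₀ y) ∧ d (π₀ x) (π₀ y) = d (π₁ x) (π₁ y) := by
  intro x hx y hy
  have hsum := Submodule.projection_add_projection_eq_self hcompl
  exact d_symmetry_of_decomposition F interp p hcompl hcompat hgs I hI hIT t
    (by rw [hml, if_pos (by omega)]) (by rw [hml, if_pos (by omega)]) a ha _ rfl _ _ _ _
    (Submodule.coe_mem _) (Submodule.coe_mem _) (Submodule.coe_mem _) (Submodule.coe_mem _)
    ((hsum x).symm ▸ hx) ((hsum y).symm ▸ hy)
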